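/- Let k be a positive integer and define F_k(t) = 4π/3 + 4π (2/√π)^k ∫₁^∞ r^{2−k} (∫_{(r−1)/(2√t)}^∞ e^{−η²} dη)^k dr for t > 0. Then as t → 0⁺, F_k(t) = 4π/3 + 8π (2/√π)^k A_k t^{1/2} + 16π (2/√π)^k (2 − k) B_k t + O(t^{3/2}), where A_k = ∫₀^∞ (∫_ρ^∞ e^{−η²} dη)^k dρ and B_k = ∫₀^∞ ρ (∫_ρ^∞ e^{−η²} dη)^k dρ. In particular the coefficient of t vanishes when k = 2, and for k = 1 the expansion reads F_1(t) = 4π/3 + 8√π t^{1/2} + 4π t + O(t^{3/2}). -/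

import Mathlib

open MeasureTheory Filter Topology Real

/-- Expected volume `Q_{k,3}(t)` of the intersection of `k` independent Wiener sausages
generated by the closed unit ball in `ℝ³`. -/
noncomputable def wienerSausageBallVolume (k : ℕ) (t : ℝ) : ℝ :=
  4 * Real.pi / 3 +
    4 * Real.pi * (2 / Real.sqrt Real.pi) ^ k *
      ∫ r in Set.Ioi (1:ℝ),
        r ^ ((2:ℝ) - (k:ℝ)) *
          (∫ η in Set.Ioi ((r - 1) / (2 * Real.sqrt t)), Real.exp (-η ^ 2)) ^ k

/-- `A_k = ∫₀^∞ (∫_ρ^∞ e^{-η²} dη)^k dρ`. -/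
noncomputable def gaussianTailMomentZero (k : ℕ) : ℝ :=
  ∫ ρ in Set.Ioi (0:ℝ), (∫ η in Set.Ioi ρ, Real.exp (-η ^ 2)) ^ k

/-- `B_k = ∫₀^∞ ρ (∫_ρ^∞ e^{-η²} dη)^k dρ`. -/
noncomputable def gaussianTailMomentOne (k : ℕ) : ℝ :=
  ∫ ρ in Set.Ioi (0:ℝ), ρ * (∫ η in Set.Ioi ρ, Real.exp (-η ^ 2)) ^ k

/-- The Gaussian tail `∫_ρ^∞ e^{-η²} dη`. -/
noncomputable def gaussianTail (ρ : ℝ) : ℝ := ∫ η in Set.Ioi ρ, Real.exp (-η ^ 2)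

lemma integrable_exp_neg_sq : Integrable fun η : ℝ => Real.exp (-η ^ 2) := by
  simpa using integrable_exp_neg_mul_sq (b := 1) one_pos

lemma exp_neg_sq_le (η : ℝ) : Real.exp (-η ^ 2) ≤ Real.exp 1 * Real.exp (-η) := by
  rw [← Real.exp_add]
  exact Real.exp_le_exp.2 (by nlinarith [sq_nonneg (η - 1 / 2)])

lemma gaussianTail_nonneg (ρ : ℝ) : 0 ≤ gaussianTail ρ :=
  integral_nonneg fun _ => (Real.exp_pos _).le

lemma gaussianTail_antitone : Antitone gaussianTail := fun _ _ h =>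
  setIntegral_mono_set integrable_exp_neg_sq.integrableOn
    (ae_of_all _ fun _ => (Real.exp_pos _).le) (Set.Ioi_subset_Ioi h).eventuallyLE

lemma gaussianTail_le (ρ : ℝ) : gaussianTail ρ ≤ Real.exp 1 * Real.exp (-ρ) := by
  rw [← integral_exp_neg_Ioi ρ, ← integral_const_mul]
  exact setIntegral_mono integrable_exp_neg_sq.integrableOn
    ((integrableOn_exp_neg_Ioi ρ).const_mul _) exp_neg_sq_le

lemma gaussianTail_zero : gaussianTail 0 = Real.sqrt Real.pi / 2 := by
  simpa [gaussianTail] using integral_gaussian_Ioi 1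

lemma hasDerivAt_gaussianTail (ρ : ℝ) :
    HasDerivAt gaussianTail (-Real.exp (-ρ ^ 2)) ρ := by
  have heq : gaussianTail = fun x => gaussianTail 0 - ∫ η in (0:ℝ)..x, Real.exp (-η ^ 2) := by
    funext x
    have h := intervalIntegral.integral_Ioi_sub_Ioi' (a := 0) (b := x)
      integrable_exp_neg_sq.integrableOn integrable_exp_neg_sq.integrableOn
    simp only [gaussianTail]
    linarith
  rw [heq]
  have hc : Continuous fun η : ℝ => Real.exp (-η ^ 2) := by fun_prop
  exact (hc.integral_hasStrictDerivAt 0 ρ).hasDerivAt.const_sub _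

lemma gaussianTail_pow_le {k : ℕ} (hk : 1 ≤ k) {ρ : ℝ} (hρ : 0 ≤ ρ) :
    gaussianTail ρ ^ k ≤ Real.exp 1 ^ k * Real.exp (-ρ) := by
  calc gaussianTail ρ ^ k ≤ (Real.exp 1 * Real.exp (-ρ)) ^ k :=
        pow_le_pow_left₀ (gaussianTail_nonneg ρ) (gaussianTail_le ρ) k
    _ = Real.exp 1 ^ k * Real.exp (-ρ) ^ k := mul_pow ..
    _ ≤ Real.exp 1 ^ k * Real.exp (-ρ) := by
        gcongr
        exact pow_le_of_le_one (Real.exp_pos _).le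
          (Real.exp_le_one_iff.2 (by linarith)) (by omega)

lemma integrableOn_pow_mul_gaussianTail_pow (j : ℕ) {k : ℕ} (hk : 1 ≤ k) :
    IntegrableOn (fun ρ => ρ ^ j * gaussianTail ρ ^ k) (Set.Ioi 0) := by
  have hG : IntegrableOn (fun ρ : ℝ => Real.exp 1 ^ k * (Real.exp (-ρ) * ρ ^ j)) (Set.Ioi 0) := by
    have h := Real.GammaIntegral_convergent (s := (j:ℝ) + 1) (by positivity)
    simp only [add_sub_cancel_right, Real.rpow_natCast] at h
    exact h.const_mul _
  refine Integrable.mono' hG ?_ ?_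
  · exact ((measurable_id.pow_const j).mul
      (gaussianTail_antitone.measurable.pow_const k)).aestronglyMeasurable
  · filter_upwards [ae_restrict_mem measurableSet_Ioi] with ρ hρ
    have hρ : 0 < ρ := hρ
    have h0 := gaussianTail_nonneg ρ
    rw [Real.norm_of_nonneg (by positivity)]
    calc ρ ^ j * gaussianTail ρ ^ k ≤ ρ ^ j * (Real.exp 1 ^ k * Real.exp (-ρ)) := by
          gcongr
          exact gaussianTail_pow_le hk hρ.le
      _ = _ := by ring

/-- Any function dominated by `e · e^{-x}` decays faster than every power. -/
lemma tendsto_pow_mul_of_le_exp_neg (n : ℕ) {f : ℝ → ℝ} (h0 : ∀ x, 0 ≤ f x)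
    (hf : ∀ x, f x ≤ Real.exp 1 * Real.exp (-x)) :
    Tendsto (fun x => x ^ n * f x) atTop (𝓝 0) := by
  have h := (Real.tendsto_pow_mul_exp_neg_atTop_nhds_zero n).const_mul (Real.exp 1)
  rw [mul_zero] at h
  refine squeeze_zero' ?_ ?_ h
  · filter_upwards [eventually_ge_atTop 0] with x hx
    have := h0 x
    positivity
  · filter_upwards [eventually_ge_atTop 0] with x hx
    calc x ^ n * f x ≤ x ^ n * (Real.exp 1 * Real.exp (-x)) := by
          gcongr
          exact hf x
      _ = _ := by ring

lemma tendsto_pow_mul_gaussianTail (n : ℕ) :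
    Tendsto (fun x => x ^ n * gaussianTail x) atTop (𝓝 0) :=
  tendsto_pow_mul_of_le_exp_neg n gaussianTail_nonneg gaussianTail_le

lemma tendsto_pow_mul_exp_neg_sq (n : ℕ) :
    Tendsto (fun x : ℝ => x ^ n * Real.exp (-x ^ 2)) atTop (𝓝 0) :=
  tendsto_pow_mul_of_le_exp_neg n (fun _ => (Real.exp_pos _).le) exp_neg_sq_le

lemma hasDerivAt_exp_neg_sq (x : ℝ) :
    HasDerivAt (fun x : ℝ => Real.exp (-x ^ 2)) (Real.exp (-x ^ 2) * -(2 * x)) x := by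
  simpa using ((hasDerivAt_pow 2 x).neg).exp

lemma gaussianTailMomentZero_one : gaussianTailMomentZero 1 = 1 / 2 := by
  have hd : ∀ x ∈ Set.Ici (0:ℝ), HasDerivAt
      (fun x : ℝ => x ^ 1 * gaussianTail x - x ^ 0 * Real.exp (-x ^ 2) / 2)
      (gaussianTail x ^ 1) x := by
    intro x _
    simp only [pow_one, pow_zero, one_mul]
    have h := ((hasDerivAt_id x).mul (hasDerivAt_gaussianTail x)).sub
      ((hasDerivAt_exp_neg_sq x).div_const 2)
    refine h.congr_deriv ?_
    simp only [id]
    ring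
  have hl := (tendsto_pow_mul_gaussianTail 1).sub ((tendsto_pow_mul_exp_neg_sq 0).div_const 2)
  have h := integral_Ioi_of_hasDerivAt_of_tendsto' hd
    (by simpa using integrableOn_pow_mul_gaussianTail_pow 0 le_rfl) hl
  change ∫ ρ in Set.Ioi (0:ℝ), gaussianTail ρ ^ 1 = _
  rw [h]
  norm_num

lemma gaussianTailMomentOne_one : gaussianTailMomentOne 1 = Real.sqrt Real.pi / 8 := by
  have hd : ∀ x ∈ Set.Ici (0:ℝ), HasDerivAt
      (fun x : ℝ => x ^ 2 * gaussianTail x / 2 - x ^ 1 * Real.exp (-x ^ 2) / 4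
        - x ^ 0 * gaussianTail x / 4)
      (x * gaussianTail x ^ 1) x := by
    intro x _
    simp only [pow_one, pow_zero, one_mul]
    have h := ((((hasDerivAt_pow 2 x).mul (hasDerivAt_gaussianTail x)).div_const 2).sub
      (((hasDerivAt_id x).mul (hasDerivAt_exp_neg_sq x)).div_const 4)).sub
      ((hasDerivAt_gaussianTail x).div_const 4)
    refine h.congr_deriv ?_
    norm_num
    ring
  have hl := (((tendsto_pow_mul_gaussianTail 2).div_const 2).sub
    ((tendsto_pow_mul_exp_neg_sq 1).div_const 4)).sub
    ((tendsto_pow_mul_gaussianTail 0).div_const 4)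
  have h := integral_Ioi_of_hasDerivAt_of_tendsto' hd
    (by simpa using integrableOn_pow_mul_gaussianTail_pow 1 le_rfl) hl
  change ∫ ρ in Set.Ioi (0:ℝ), ρ * gaussianTail ρ ^ 1 = _
  rw [h, gaussianTail_zero]
  norm_num
  ring

/-- Second-order Taylor bound for `(1 + x)^{2 - k}` on the half-line. -/
lemma abs_one_add_rpow_sub_le {k : ℕ} (hk : 1 ≤ k) {x : ℝ} (hx : 0 ≤ x) :
    |(1 + x) ^ ((2:ℝ) - (k:ℝ)) - 1 - ((2:ℝ) - (k:ℝ)) * x| ≤ (k:ℝ) ^ 2 * x ^ 2 := by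
  rcases hk.eq_or_lt with rfl | hk
  · norm_num
    positivity
  obtain ⟨n, rfl⟩ : ∃ n, k = n + 2 := ⟨k - 2, by omega⟩
  have hexp : (2:ℝ) - ((n + 2 : ℕ) : ℝ) = -(n:ℝ) := by push_cast; ring
  have hb : 1 + (n:ℝ) * x ≤ (1 + x) ^ n := one_add_mul_le_pow (by linarith) n
  have hnx : 0 ≤ (n:ℝ) * x := by positivity
  have hpow : 0 < (1 + x) ^ n := by positivity
  rw [hexp, Real.rpow_neg (by linarith), Real.rpow_natCast]
  have hlow : 1 - (n:ℝ) * x ≤ ((1 + x) ^ n)⁻¹ := by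
    have hinv : (1 + x)⁻¹ = 1 + -(x / (1 + x)) := by field_simp; ring
    have hle : x / (1 + x) ≤ x := div_le_self hx (by linarith)
    have hle1 : x / (1 + x) ≤ 1 := (div_le_one (by linarith)).2 (by linarith)
    rw [← inv_pow, hinv]
    refine le_trans ?_ (one_add_mul_le_pow (by linarith) n)
    nlinarith [mul_le_mul_of_nonneg_left hle (Nat.cast_nonneg (α := ℝ) n)]
  have hup : ((1 + x) ^ n)⁻¹ ≤ 1 - n * x + (n * x) ^ 2 := by
    refine (inv_anti₀ (by linarith) hb).trans ?_
    rw [inv_le_iff_one_le_mul₀ (by linarith)]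
    nlinarith [pow_nonneg hnx 3]
  rw [abs_of_nonneg (by linarith)]
  push_cast
  nlinarith [mul_nonneg (by positivity : (0:ℝ) ≤ 4 * n + 4) (sq_nonneg x)]

/-- Rescaling `r = 1 + sρ` in the radial integral. -/
lemma integral_radial_rescale (k : ℕ) {s : ℝ} (hs : 0 < s) :
    ∫ r in Set.Ioi (1:ℝ), r ^ ((2:ℝ) - (k:ℝ)) * gaussianTail ((r - 1) / s) ^ k =
      s * ∫ ρ in Set.Ioi (0:ℝ), (1 + s * ρ) ^ ((2:ℝ) - (k:ℝ)) * gaussianTail ρ ^ k := by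
  have h1 := integral_comp_mul_left_Ioi
    (fun y : ℝ => (1 + y) ^ ((2:ℝ) - (k:ℝ)) * gaussianTail (y / s) ^ k) 0 hs
  have h2 := (measurePreserving_add_right volume (1:ℝ)).setIntegral_preimage_emb
    (measurableEmbedding_addRight 1)
    (fun r : ℝ => r ^ ((2:ℝ) - (k:ℝ)) * gaussianTail ((r - 1) / s) ^ k) (Set.Ioi 1)
  simp only [mul_zero, mul_div_cancel_left₀ _ hs.ne', smul_eq_mul] at h1
  simp only [Set.preimage_add_const_Ioi, sub_self, add_sub_cancel_right] at h2
  rw [h1, ← h2, mul_inv_cancel_left₀ hs.ne']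
  simp only [add_comm]

lemma abs_integral_one_add_rpow_sub_le {k : ℕ} (hk : 1 ≤ k) {s : ℝ} (hs : 0 < s) :
    |(∫ ρ in Set.Ioi (0:ℝ), (1 + s * ρ) ^ ((2:ℝ) - (k:ℝ)) * gaussianTail ρ ^ k)
        - gaussianTailMomentZero k - ((2:ℝ) - (k:ℝ)) * s * gaussianTailMomentOne k|
      ≤ (k:ℝ) ^ 2 * s ^ 2 * ∫ ρ in Set.Ioi (0:ℝ), ρ ^ 2 * gaussianTail ρ ^ k := by
  have i0 : IntegrableOn (fun ρ => gaussianTail ρ ^ k) (Set.Ioi 0) := by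
    simpa using integrableOn_pow_mul_gaussianTail_pow 0 hk
  have i1 : IntegrableOn (fun ρ => ρ * gaussianTail ρ ^ k) (Set.Ioi 0) := by
    simpa using integrableOn_pow_mul_gaussianTail_pow 1 hk
  have i2 := integrableOn_pow_mul_gaussianTail_pow 2 hk
  set R : ℝ → ℝ := fun ρ =>
    ((1 + s * ρ) ^ ((2:ℝ) - (k:ℝ)) - 1 - ((2:ℝ) - (k:ℝ)) * (s * ρ)) * gaussianTail ρ ^ k with hR
  have hbound : ∀ᵐ ρ ∂volume.restrict (Set.Ioi (0:ℝ)),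
      ‖R ρ‖ ≤ (k:ℝ) ^ 2 * s ^ 2 * (ρ ^ 2 * gaussianTail ρ ^ k) := by
    filter_upwards [ae_restrict_mem measurableSet_Ioi] with ρ hρ
    have hρ : 0 < ρ := hρ
    have hg := pow_nonneg (gaussianTail_nonneg ρ) k
    rw [hR, norm_mul, Real.norm_of_nonneg hg, Real.norm_eq_abs]
    calc _ ≤ ((k:ℝ) ^ 2 * (s * ρ) ^ 2) * gaussianTail ρ ^ k :=
          mul_le_mul_of_nonneg_right (abs_one_add_rpow_sub_le hk (by positivity)) hg
      _ = _ := by ring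
  have hmeas : Measurable R := by
    have := gaussianTail_antitone.measurable
    fun_prop
  have iR : IntegrableOn R (Set.Ioi 0) :=
    Integrable.mono' (i2.const_mul _) hmeas.aestronglyMeasurable hbound
  have hsplit : ∫ ρ in Set.Ioi (0:ℝ), (1 + s * ρ) ^ ((2:ℝ) - (k:ℝ)) * gaussianTail ρ ^ k =
      (∫ ρ in Set.Ioi (0:ℝ), R ρ) + gaussianTailMomentZero k
        + ((2:ℝ) - (k:ℝ)) * s * gaussianTailMomentOne k := by
    change _ = _ + (∫ ρ in Set.Ioi (0:ℝ), gaussianTail ρ ^ k)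
      + _ * ∫ ρ in Set.Ioi (0:ℝ), ρ * gaussianTail ρ ^ k
    rw [← integral_const_mul, ← integral_add iR i0, ← integral_add ?_ (i1.const_mul _)]
    · congr 1
      funext ρ
      simp only [hR]
      ring
    · exact iR.add i0
  rw [hsplit, ← integral_const_mul, sub_sub, add_assoc, add_sub_cancel_right]
  exact norm_integral_le_of_norm_le (i2.const_mul _) hbound

lemma wienerSausageBallVolume_isBigO {k : ℕ} (hk : 1 ≤ k) :
    (fun t : ℝ =>
        wienerSausageBallVolume k t -
          (4 * Real.pi / 3
            + 8 * Real.pi * (2 / Real.sqrt Real.pi) ^ k *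
                gaussianTailMomentZero k * t ^ ((1:ℝ)/2)
            + 16 * Real.pi * (2 / Real.sqrt Real.pi) ^ k * ((2:ℝ) - (k:ℝ)) *
                gaussianTailMomentOne k * t))
      =O[𝓝[>] (0:ℝ)] fun t => t ^ ((3:ℝ)/2) := by
  set c : ℝ := (2 / Real.sqrt Real.pi) ^ k
  set M : ℝ := ∫ ρ in Set.Ioi (0:ℝ), ρ ^ 2 * gaussianTail ρ ^ k
  have hc0 : 0 ≤ c := by positivity
  refine Asymptotics.IsBigO.of_bound (32 * Real.pi * c * (k:ℝ) ^ 2 * M) ?_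
  filter_upwards [self_mem_nhdsWithin] with t ht
  have ht : 0 < t := ht
  obtain ⟨q, hq, rfl⟩ : ∃ q : ℝ, 0 < q ∧ t = q ^ 2 :=
    ⟨Real.sqrt t, Real.sqrt_pos.2 ht, (Real.sq_sqrt ht.le).symm⟩
  have h12 : (q ^ 2) ^ ((1:ℝ)/2) = q := by
    rw [← Real.sqrt_eq_rpow, Real.sqrt_sq hq.le]
  have h32 : (q ^ 2) ^ ((3:ℝ)/2) = q ^ 3 := by
    rw [← Real.rpow_natCast, ← Real.rpow_mul hq.le, ← Real.rpow_natCast]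
    norm_num
  have hs : 0 < 2 * q := by positivity
  have hmain := abs_integral_one_add_rpow_sub_le hk hs
  have hvol : wienerSausageBallVolume k (q ^ 2) = 4 * Real.pi / 3 + 4 * Real.pi * c *
      (2 * q * ∫ ρ in Set.Ioi (0:ℝ), (1 + 2 * q * ρ) ^ ((2:ℝ) - (k:ℝ)) * gaussianTail ρ ^ k) := by
    rw [← integral_radial_rescale k hs, wienerSausageBallVolume, Real.sqrt_sq hq.le]
    rfl
  rw [hvol, h12, h32, Real.norm_eq_abs, Real.norm_of_nonneg (by positivity)]
  set J := ∫ ρ in Set.Ioi (0:ℝ), (1 + 2 * q * ρ) ^ ((2:ℝ) - (k:ℝ)) * gaussianTail ρ ^ k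
  calc _ = |8 * Real.pi * c * q * (J - gaussianTailMomentZero k
        - ((2:ℝ) - (k:ℝ)) * (2 * q) * gaussianTailMomentOne k)| := by
        congr 1
        ring
    _ ≤ 8 * Real.pi * c * q * ((k:ℝ) ^ 2 * (2 * q) ^ 2 * M) := by
        rw [abs_mul, abs_of_nonneg (by positivity : 0 ≤ 8 * Real.pi * c * q)]
        exact mul_le_mul_of_nonneg_left hmain (by positivity)
    _ = _ := by ring

theorem wienerSausageBall_small_time_expansion :
    (∀ k : ℕ, 1 ≤ k →
      (fun t : ℝ =>
          wienerSausageBallVolume k t -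
            (4 * Real.pi / 3
              + 8 * Real.pi * (2 / Real.sqrt Real.pi) ^ k *
                  gaussianTailMomentZero k * t ^ ((1:ℝ)/2)
              + 16 * Real.pi * (2 / Real.sqrt Real.pi) ^ k * ((2:ℝ) - (k:ℝ)) *
                  gaussianTailMomentOne k * t))
        =O[𝓝[>] (0:ℝ)] fun t => t ^ ((3:ℝ)/2)) ∧
    (∀ t : ℝ,
      16 * Real.pi * (2 / Real.sqrt Real.pi) ^ 2 * ((2:ℝ) - (2:ℕ)) *
          gaussianTailMomentOne 2 * t = 0) ∧
    ((fun t : ℝ =>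
        wienerSausageBallVolume 1 t -
          (4 * Real.pi / 3 + 8 * Real.sqrt Real.pi * t ^ ((1:ℝ)/2)
            + 4 * Real.pi * t))
      =O[𝓝[>] (0:ℝ)] fun t => t ^ ((3:ℝ)/2)) := by
  refine ⟨fun k hk => wienerSausageBallVolume_isBigO hk, fun t => by norm_num, ?_⟩
  refine (wienerSausageBallVolume_isBigO le_rfl).congr_left fun t => ?_
  rw [gaussianTailMomentZero_one, gaussianTailMomentOne_one]
  have hne : Real.sqrt Real.pi ≠ 0 := (Real.sqrt_pos.2 Real.pi_pos).ne'
  have h1 : 8 * Real.pi * (2 / Real.sqrt Real.pi) ^ 1 * (1 / 2) = 8 * Real.sqrt Real.pi := by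
    field_simp
    rw [Real.sq_sqrt Real.pi_pos.le]
  have h2 : 16 * Real.pi * (2 / Real.sqrt Real.pi) ^ 1 * ((2:ℝ) - (1:ℕ)) *
      (Real.sqrt Real.pi / 8) = 4 * Real.pi := by
    field_simp
    norm_num
  rw [h1, h2]
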